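/- For all (b,c) ∈ ℤ_{≥0}², the specialization of Q_{b,c} at x = 1 and y = 1 satisfies Q_{b,c}(1,1,z,w) = (−1)^c · z^{c} · w^{b+2c} · ∏_{j=0}^{b+c−1}(z − q^{4j}) in K[z,w]. -/

import Mathlib

noncomputable section

open MvPolynomial

/-- The field `K = ℚ(q)` of rational functions in `q` over `ℚ`. -/
abbrev K : Type := RatFunc ℚ

/-- The variable `q ∈ K = ℚ(q)`. -/
def q : K := RatFunc.X

/-- The polynomial ring `K[x,y,z,w]`. -/
abbrev P4 : Type := MvPolynomial (Fin 4) K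

def xP : P4 := X 0
def yP : P4 := X 1
def zP : P4 := X 2
def wP : P4 := X 3

/-- The `K`-algebra map `K[x,y,z,w] → K[x,y,z,w]` rescaling the variables:
`x ↦ q^a·x`, `y ↦ q^b·y`, `z ↦ q^c·z`, `w ↦ q^d·w`. -/
def scl (a b c d : ℤ) : P4 →ₐ[K] P4 :=
  aeval ![C (q ^ a) * X 0, C (q ^ b) * X 1, C (q ^ c) * X 2, C (q ^ d) * X 3]

/-- The polynomials `Q_{b,0}(x,y,z,w)`, defined by the recursion (rec1) of the paper. -/
def Qb0 : ℕ → P4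
  | 0 => 1
  | b + 1 =>
      C (q ^ (4 * (b : ℤ))) * wP * yP * (zP - 1) * scl 0 0 (-4) 0 (Qb0 b)
    + C (q ^ (4 * (b : ℤ))) * wP * xP * (yP - 1) * yP * zP * scl 0 (-2) 0 0 (Qb0 b)
    + C (q ^ (6 * (b : ℤ))) * (wP - 1) * (yP - 1) * scl 0 (-2) 0 (-2) (Qb0 b)
    + C (q ^ (4 * (b : ℤ))) * wP * (xP - 1) * yP * (zP - 1) * scl (-4) 2 (-4) 0 (Qb0 b)
    + C (q ^ (6 * (b : ℤ))) * (wP - 1) * (xP - 1) * yP * scl (-4) 0 0 (-2) (Qb0 b)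

/-- The polynomials `Q_{b,c}(x,y,z,w)`: for `c ≥ 1` they are defined by the
recursion (rec2) of the paper, lowering `c`; for `c = 0` by `Qb0`. -/
def Q : ℕ → ℕ → P4
  | b, 0 => Qb0 b
  | b, c + 1 =>
      - (C (q ^ (4 * (b : ℤ) + 8 * (c : ℤ))) * wP ^ 2 * yP * (zP - 1) * zP)
          * scl 0 0 (-4) 0 (Q b c)
    + (C (q ^ (4 * (b : ℤ) + 4 * (c : ℤ) - 2)) * wP * xP * (yP - 1) * zP)
          * (C (q ^ (2 * (b : ℤ) + 4 * (c : ℤ) + 4)) - C (q ^ (2 : ℤ)) * wP * yP * zP)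
          * scl 0 (-2) 0 0 (Q b c)
    - (C (q ^ (6 * (b : ℤ) + 8 * (c : ℤ))) * (wP - 1) * wP * (yP - 1) * zP)
          * scl 0 (-2) 0 (-2) (Q b c)
    + (C (q ^ (4 * (b : ℤ) + 8 * (c : ℤ) - 2)) * wP * (xP - 1) * (zP - 1))
          * (C (q ^ (2 * (b : ℤ) + 4 * (c : ℤ) + 4)) - C (q ^ (2 : ℤ)) * wP * yP * zP)
          * scl (-4) 2 (-4) 0 (Q b c)
    + (C (q ^ (6 * (b : ℤ) + 8 * (c : ℤ) - 2)) * (wP - 1) * (xP - 1))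
          * (C (q ^ (2 * (b : ℤ) + 4 * (c : ℤ) + 4)) - C (q ^ (2 : ℤ)) * wP * yP * zP)
          * scl (-4) 0 0 (-2) (Q b c)

/-- The specialization at `x = y = 1` commutes with rescaling `z`. -/
theorem spec_scl (p : P4) :
    aeval ![(1 : P4), 1, X 2, X 3] (scl 0 0 (-4) 0 p)
      = scl 0 0 (-4) 0 (aeval ![(1 : P4), 1, X 2, X 3] p) := by
  have h : (aeval ![(1 : P4), 1, X 2, X 3]).comp (scl 0 0 (-4) 0)
      = (scl 0 0 (-4) 0).comp (aeval ![(1 : P4), 1, X 2, X 3]) := by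
    apply MvPolynomial.algHom_ext
    intro i
    fin_cases i <;> simp [scl, algHom_C]
  exact DFunLike.congr_fun h p

theorem q_ne_zero : q ≠ 0 := RatFunc.X_ne_zero

/-- Rescaling the product. -/
theorem scl_prod (n : ℕ) :
    C (q ^ (4 * n)) * ((X 2 : P4) - 1) *
        scl 0 0 (-4) 0 (∏ j ∈ Finset.range n, ((X 2 : P4) - C (q ^ (4 * j))))
      = ∏ j ∈ Finset.range (n + 1), ((X 2 : P4) - C (q ^ (4 * j))) := by
  induction n with
  | zero => simp
  | succ n ih =>
    conv_rhs => rw [Finset.prod_range_succ, ← ih]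
    rw [Finset.prod_range_succ, map_mul]
    have h2 : C (q ^ 4) * scl 0 0 (-4) 0 ((X 2 : P4) - C (q ^ (4 * n)))
        = X 2 - C (q ^ (4 * (n + 1))) := by
      have h3 : (C (q ^ 4) : P4) * C (q ^ (-4 : ℤ)) = 1 := by
        rw [← C_mul, ← C_1]
        congr 1
        have := q_ne_zero
        rw [zpow_neg]
        exact mul_inv_cancel₀ (pow_ne_zero 4 this)
      have h4 : scl 0 0 (-4) 0 (X 2 : P4) = C (q ^ (-4 : ℤ)) * X 2 := by simp [scl]
      have h5 : scl 0 0 (-4) 0 (C (q ^ (4 * n)) : P4) = C (q ^ (4 * n)) := by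
        simp [scl, algHom_C]
      rw [map_sub, h4, h5, mul_sub, ← mul_assoc, h3, one_mul, ← C_mul]
      congr 2
      ring
    rw [← h2, show 4 * (n + 1) = 4 * n + 4 by ring, pow_add, C_mul]
    ring

theorem scl_z : scl 0 0 (-4) 0 (X 2 : P4) = C (q ^ (-4 : ℤ)) * X 2 := by simp [scl]

theorem scl_w : scl 0 0 (-4) 0 (X 3 : P4) = X 3 := by simp [scl]

theorem scl_const (a : K) : scl 0 0 (-4) 0 (C a : P4) = C a := by simp [scl, algHom_C]

theorem spec_const (a : K) : aeval ![(1 : P4), 1, X 2, X 3] (C a : P4) = C a := by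
  simp [algHom_C]

theorem Qb0_spec (b : ℕ) :
    aeval ![(1 : P4), 1, X 2, X 3] (Qb0 b) =
      (X 3 : P4) ^ b * (∏ j ∈ Finset.range b, ((X 2 : P4) - C (q ^ (4 * j)))) := by
  induction b with
  | zero => simp [Qb0]
  | succ b ih =>
    have e : aeval ![(1 : P4), 1, X 2, X 3] (Qb0 (b + 1)) =
        C (q ^ (4 * b)) * X 3 * (X 2 - 1) *
          scl 0 0 (-4) 0 (aeval ![(1 : P4), 1, X 2, X 3] (Qb0 b)) := by
      rw [← spec_scl, Qb0]
      simp only [map_add, map_mul, map_sub, map_one, spec_const, xP, yP, zP, wP, aeval_X]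
      simp only [Matrix.cons_val]
      rw [show (4 * (b : ℤ)) = ((4 * b : ℕ) : ℤ) by push_cast; rfl, zpow_natCast]
      ring
    rw [e, ih, ← scl_prod, map_mul, map_pow (scl 0 0 (-4) 0), scl_w]
    ring

/-- `Q_{b,c}(1,1,z,w) = (−1)^c z^{c} w^{b+2c} ∏_{j<b+c}(z − q^{4j})`. -/
theorem Q_spec_x1y1 (b c : ℕ) :
    aeval ![(1 : P4), 1, X 2, X 3] (Q b c) =
      C ((-1 : K) ^ c) * (X 2 : P4) ^ c * (X 3 : P4) ^ (b + 2 * c)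
        * (∏ j ∈ Finset.range (b + c), ((X 2 : P4) - C (q ^ (4 * j)))) := by
  induction c with
  | zero =>
    rw [Q, Qb0_spec, pow_zero, pow_zero, C_1, Nat.mul_zero, Nat.add_zero, one_mul, one_mul]
  | succ c ih =>
    have e : aeval ![(1 : P4), 1, X 2, X 3] (Q b (c + 1)) =
        - (C (q ^ (4 * b + 8 * c)) * X 3 ^ 2 * (X 2 - 1) * X 2) *
          scl 0 0 (-4) 0 (aeval ![(1 : P4), 1, X 2, X 3] (Q b c)) := by
      rw [← spec_scl, Q]
      simp only [map_add, map_mul, map_sub, map_neg, map_pow (aeval ![(1 : P4), 1, X 2, X 3]), map_one, spec_const, xP, yP, zP,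
        wP, aeval_X]
      simp only [Matrix.cons_val]
      rw [show (4 * (b : ℤ) + 8 * (c : ℤ)) = ((4 * b + 8 * c : ℕ) : ℤ) by push_cast; rfl,
        zpow_natCast]
      ring
    have h3 : (C (q ^ (4 * c)) : P4) * C (q ^ (-4 : ℤ)) ^ c = 1 := by
      rw [← C_pow, ← C_mul, ← C_1]
      congr 1
      rw [pow_mul, ← mul_pow, zpow_neg]
      have := mul_inv_cancel₀ (pow_ne_zero 4 q_ne_zero)
      exact (congrArg (· ^ c) this).trans (one_pow c)
    rw [e, ih, show b + (c + 1) = b + c + 1 by ring, ← scl_prod, map_mul, map_mul, map_mul,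
      map_pow (scl 0 0 (-4) 0), map_pow (scl 0 0 (-4) 0), scl_w, scl_z, scl_const, mul_pow,
      show 4 * b + 8 * c = 4 * (b + c) + 4 * c by ring, pow_add q, C_mul, pow_succ (-1 : K),
      C_mul, C_neg, C_1]
    linear_combination (-(C (q ^ (4 * (b + c))) * X 3 ^ 2 * (X 2 - 1) * X 2
      * C ((-1 : K) ^ c) * X 2 ^ c * X 3 ^ (b + 2 * c)
      * scl 0 0 (-4) 0 (∏ j ∈ Finset.range (b + c), ((X 2 : P4) - C (q ^ (4 * j)))))) * h3
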